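/- Let 0 < ν ≤ 1/2. Then there exist constants C_ν > 0 and C'_ν > 0 such that for all real s > 0: J_ν(s)² + Y_ν(s)² > 0, |J_ν(s)·cos(νπ) − Y_ν(s)·sin(νπ)| / (J_ν(s)² + Y_ν(s)²) ≤ C_ν · s^ν (1+s^{1−2ν})/(1+s^{1/2−ν}), and |J_ν(s)| / (J_ν(s)² + Y_ν(s)²) ≤ C'_ν · s^{3ν} (1+s^{1−2ν})/(1+s^{1/2+ν}). -/

import Mathlib

open MeasureTheory Filter Real

/-- The Bessel function of the first kind (Schläfli's integral representation):
`J_ν(s) = (1/π)∫_0^π cos(s sin θ - νθ) dθ - (sin(νπ)/π)∫_0^∞ e^{-s sinh t - νt} dt`. -/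
noncomputable def besselJ (ν s : ℝ) : ℝ :=
  (1 / π) * ∫ θ in (0 : ℝ)..π, Real.cos (s * Real.sin θ - ν * θ) -
    (Real.sin (ν * π) / π) * ∫ t in Set.Ioi (0 : ℝ), Real.exp (-s * Real.sinh t - ν * t)

/-- The Bessel function of the second kind (integral representation):
`Y_ν(s) = (1/π)∫_0^π sin(s sin θ - νθ) dθ
  - (1/π)∫_0^∞ (e^{νt} + e^{-νt} cos(νπ)) e^{-s sinh t} dt`. -/
noncomputable def besselY (ν s : ℝ) : ℝ :=
  (1 / π) * ∫ θ in (0 : ℝ)..π, Real.sin (s * Real.sin θ - ν * θ) -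
    (1 / π) * ∫ t in Set.Ioi (0 : ℝ),
      (Real.exp (ν * t) + Real.exp (-ν * t) * Real.cos (ν * π)) * Real.exp (-s * Real.sinh t)

/-!
The Wronskian `w = s (J Y' - J' Y)` is constant, and the energy `u'² + u²` of `u = √s f` stays
bounded at infinity for every solution `f` of Bessel's equation, so Cauchy–Schwarz gives
`J² + Y² ≳ w² / s` away from `0`. Near `0` the hyperbolic part `∫ e^{νt - s sinh t} dt` forces
`|Y| ≳ s^{-ν}`, and then `(J / Y)' = -w / (s Y²)` integrates to `J / Y = O(w s^{2ν})`.

That `w ≠ 0` follows from the last estimate, since for `w = 0` it makes `J` vanish near `0`. But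
then the derivatives of the circular and hyperbolic parts of `J` agree there to every order; the
former stay bounded and the latter blow up, so the hyperbolic part is absent, `ν = n` is an integer,
and this is contradicted by the `n`-th derivative of `J_n` at `0`, which equals `2^{-n}`.
-/

section BesselModulus

open Set Asymptotics
open scoped Topology

section SchlaefliIntegrals

/-- The `k`-th derivative in `s` of the circular part `∫₀^π cos (s sin θ - νθ + a) dθ` of
Schläfli's integrals; the phase is `a = 0` for `J_ν` and `a = -π/2` for `Y_ν`. -/
noncomputable def besselArc (ν a : ℝ) (k : ℕ) (s : ℝ) : ℝ :=
  ∫ θ in (0 : ℝ)..π, sin θ ^ k * cos (s * sin θ - ν * θ + a + k * (π / 2))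

/-- The `k`-th derivative in `s` of the hyperbolic part `∫₀^∞ e^{μt - s sinh t} dt` of Schläfli's
integrals, for `s > 0`. -/
noncomputable def besselTail (μ : ℝ) (k : ℕ) (s : ℝ) : ℝ :=
  ∫ t in Ioi (0 : ℝ), (-sinh t) ^ k * exp (μ * t - s * sinh t)

variable {μ c s : ℝ}

theorem tendsto_mul_sub_mul_sinh_atBot (μ : ℝ) (hc : 0 < c) :
    Tendsto (fun t => μ * t - c * sinh t) atTop atBot := by
  have hquad : Tendsto (fun t : ℝ => (μ + -(c / 4) * t) * t) atTop atBot :=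
    (tendsto_atBot_add_const_left _ μ
      (tendsto_id.const_mul_atTop_of_neg (by linarith : -(c / 4) < 0))).atBot_mul_atTop₀ tendsto_id
  refine tendsto_atBot_mono' _ ?_ hquad
  filter_upwards [eventually_ge_atTop 0] with t ht
  have hsinh : t ^ 2 / 4 ≤ sinh t := by
    rw [sinh_eq]
    nlinarith [quadratic_le_exp_of_nonneg ht, exp_le_one_iff.2 (neg_nonpos.2 ht)]
  linarith [mul_le_mul_of_nonneg_left hsinh hc.le]

theorem tendsto_exp_mul_sub_mul_sinh (μ : ℝ) (hc : 0 < c) :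
    Tendsto (fun t => exp (μ * t - c * sinh t)) atTop (𝓝 0) :=
  tendsto_exp_atBot.comp (tendsto_mul_sub_mul_sinh_atBot μ hc)

theorem integrableOn_sinh_pow_mul_exp (μ : ℝ) (k : ℕ) (hc : 0 < c) :
    IntegrableOn (fun t => (-sinh t) ^ k * exp (μ * t - c * sinh t)) (Ioi 0) := by
  refine integrable_of_isBigO_exp_neg one_pos (by fun_prop) ?_
  refine IsBigO.trans (g := fun t => exp (-1 * t) * exp ((k + μ + 1) * t - c * sinh t))
    (.of_bound' ?_) ?_
  · filter_upwards [eventually_ge_atTop 0] with t ht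
    have hsinh : |sinh t| ≤ exp t := by
      rw [abs_of_nonneg (sinh_nonneg_iff.2 ht), sinh_eq]
      linarith [exp_pos t, exp_pos (-t)]
    calc ‖(-sinh t) ^ k * exp (μ * t - c * sinh t)‖
        = |sinh t| ^ k * exp (μ * t - c * sinh t) := by simp
      _ ≤ exp t ^ k * exp (μ * t - c * sinh t) := by gcongr
      _ = ‖exp (-1 * t) * exp ((k + μ + 1) * t - c * sinh t)‖ := by
        rw [← exp_nat_mul, ← exp_add, ← exp_add, norm_of_nonneg (exp_pos _).le]
        ring_nf
  · simpa using (isBigO_refl (fun t => exp (-1 * t)) atTop).mul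
      ((tendsto_exp_mul_sub_mul_sinh _ hc).isBigO_one ℝ)

theorem hasDerivAt_besselTail (μ : ℝ) (k : ℕ) (hs : 0 < s) :
    HasDerivAt (besselTail μ k) (besselTail μ (k + 1) s) s := by
  refine (hasDerivAt_integral_of_dominated_loc_of_deriv_le
    (F := fun x t => (-sinh t) ^ k * exp (μ * t - x * sinh t))
    (F' := fun x t => (-sinh t) ^ (k + 1) * exp (μ * t - x * sinh t))
    (bound := fun t => ‖(-sinh t) ^ (k + 1) * exp (μ * t - s / 2 * sinh t)‖)
    (Ioi_mem_nhds (half_lt_self hs))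
    (.of_forall fun x => (by fun_prop : Continuous _).aestronglyMeasurable)
    (integrableOn_sinh_pow_mul_exp μ k hs)
    (by fun_prop : Continuous _).aestronglyMeasurable ?_
    (integrableOn_sinh_pow_mul_exp μ (k + 1) (half_pos hs)).norm (.of_forall ?_)).2
  · refine ae_restrict_of_forall_mem measurableSet_Ioi fun t ht x hx => ?_
    rw [norm_mul, norm_mul, norm_of_nonneg (exp_pos _).le, norm_of_nonneg (exp_pos _).le]
    have : 0 ≤ sinh t := sinh_nonneg_iff.2 (le_of_lt ht)
    gcongr
    exact le_of_lt hx
  · intro t x _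
    have hexponent : HasDerivAt (fun x => μ * t - x * sinh t) (-(1 * sinh t)) x :=
      ((hasDerivAt_id x).mul_const _).const_sub _
    exact (hexponent.exp.const_mul _).congr_deriv (by ring)

theorem hasDerivAt_besselArc (ν a : ℝ) (k : ℕ) (s : ℝ) :
    HasDerivAt (besselArc ν a k) (besselArc ν a (k + 1) s) s := by
  refine (intervalIntegral.hasDerivAt_integral_of_dominated_loc_of_deriv_le
    (F := fun x θ => sin θ ^ k * cos (x * sin θ - ν * θ + a + k * (π / 2)))
    (F' := fun x θ => sin θ ^ (k + 1) *
      cos (x * sin θ - ν * θ + a + (k + 1 : ℕ) * (π / 2)))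
    (bound := fun _ => 1) univ_mem
    (.of_forall fun x => (by fun_prop : Continuous _).aestronglyMeasurable)
    ((by fun_prop : Continuous _).intervalIntegrable _ _)
    (by fun_prop : Continuous _).aestronglyMeasurable (.of_forall ?_) (by simp)
    (.of_forall ?_)).2
  · intro θ _ x _
    rw [norm_mul, norm_pow]
    exact mul_le_one₀ (pow_le_one₀ (norm_nonneg _) (abs_sin_le_one θ)) (norm_nonneg _)
      (abs_cos_le_one _)
  · intro θ _ x _
    have hphase : HasDerivAt (fun x => x * sin θ - ν * θ + a + k * (π / 2)) (1 * sin θ) x :=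
      ((((hasDerivAt_id x).mul_const _).sub_const _).add_const _).add_const _
    refine (hphase.cos.const_mul (sin θ ^ k)).congr_deriv ?_
    push_cast
    rw [add_one_mul (k : ℝ), ← add_assoc, cos_add_pi_div_two]
    ring

theorem abs_besselArc_le (ν a : ℝ) (k : ℕ) (s : ℝ) : |besselArc ν a k s| ≤ π := by
  have := intervalIntegral.norm_integral_le_of_norm_le_const (a := 0) (b := π) (C := 1)
    (f := fun θ => sin θ ^ k * cos (s * sin θ - ν * θ + a + k * (π / 2))) fun θ _ => by
      rw [norm_mul, norm_pow]
      exact mul_le_one₀ (pow_le_one₀ (norm_nonneg _) (abs_sin_le_one θ)) (norm_nonneg _)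
        (abs_cos_le_one _)
  rwa [sub_zero, abs_of_pos pi_pos, one_mul] at this

theorem abs_besselTail_zero_le (hμ : μ < 0) (hs : 0 < s) : |besselTail μ 0 s| ≤ -1 / μ := by
  rw [show -1 / μ = ∫ t in Ioi (0 : ℝ), exp (μ * t) by simp [integral_exp_mul_Ioi hμ]]
  refine norm_integral_le_of_norm_le (f := fun t => (-sinh t) ^ 0 * exp (μ * t - s * sinh t))
    (integrableOn_exp_mul_Ioi hμ 0) (ae_restrict_of_forall_mem measurableSet_Ioi fun t ht => ?_)
  rw [pow_zero, one_mul, norm_of_nonneg (exp_pos _).le, exp_le_exp]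
  linarith [mul_nonneg hs.le (sinh_nonneg_iff.2 (le_of_lt ht))]

theorem abs_besselTail (μ : ℝ) (k : ℕ) (s : ℝ) :
    |besselTail μ k s| = ∫ t in Ioi (0 : ℝ), ‖(-sinh t) ^ k * exp (μ * t - s * sinh t)‖ := by
  have hsign : ∀ t ∈ Ioi (0 : ℝ), (-sinh t) ^ k * exp (μ * t - s * sinh t) =
      (-1) ^ k * ‖(-sinh t) ^ k * exp (μ * t - s * sinh t)‖ := fun t ht => by
    rw [norm_mul, norm_pow, norm_neg, norm_of_nonneg (sinh_nonneg_iff.2 (le_of_lt ht)),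
      norm_of_nonneg (exp_pos _).le, neg_pow (sinh t), mul_assoc]
  rw [besselTail, setIntegral_congr_fun measurableSet_Ioi hsign, integral_const_mul, abs_mul,
    abs_pow, abs_neg, abs_one, one_pow, one_mul,
    abs_of_nonneg (integral_nonneg fun _ => norm_nonneg _)]

theorem le_norm_sinh_pow_mul_exp {k : ℕ} {t : ℝ} (hk : 0 ≤ k + μ) (hs : 0 < s) (hs' : s ≤ 1 / 2)
    (ht : t ∈ Ioc (-log s) (-log s + 1)) :
    exp (-exp 1) / 4 ^ k * s ^ (-(k + μ)) ≤ ‖(-sinh t) ^ k * exp (μ * t - s * sinh t)‖ := by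
  have hexp_log : exp (-log s) = s⁻¹ := by rw [exp_neg, exp_log hs]
  have hexp_ge : 2 ≤ exp t := by
    have : 2 ≤ s⁻¹ := by rw [le_inv_comm₀ two_pos hs]; linarith
    linarith [exp_le_exp.2 ht.1.le]
  have hsinh_ge : exp t / 4 ≤ sinh t := by
    have : exp (-t) ≤ 1 := by
      rw [exp_neg]
      exact inv_le_one_of_one_le₀ (by linarith)
    rw [sinh_eq]
    linarith
  have hsinh_nonneg : 0 ≤ sinh t := (by positivity : 0 ≤ exp t / 4).trans hsinh_ge
  have hsinh_le : s * sinh t ≤ exp 1 := by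
    have : exp t ≤ s⁻¹ * exp 1 := by rw [← hexp_log, ← exp_add]; exact exp_le_exp.2 ht.2
    calc s * sinh t ≤ s * (s⁻¹ * exp 1) := by
          gcongr
          rw [sinh_eq]
          linarith [exp_pos t, exp_pos (-t)]
      _ = exp 1 := by field_simp
  calc exp (-exp 1) / 4 ^ k * s ^ (-(k + μ))
      = exp (-exp 1) / 4 ^ k * exp ((k + μ) * -log s) := by rw [rpow_def_of_pos hs]; ring_nf
    _ ≤ exp (-exp 1) / 4 ^ k * exp ((k + μ) * t) := by gcongr; exact ht.1.le
    _ = (exp t / 4) ^ k * exp (μ * t - exp 1) := by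
        rw [div_pow, ← exp_nat_mul, add_mul, exp_add, exp_sub, exp_neg]
        field_simp
    _ ≤ sinh t ^ k * exp (μ * t - s * sinh t) := by gcongr
    _ = ‖(-sinh t) ^ k * exp (μ * t - s * sinh t)‖ := by simp [abs_of_nonneg hsinh_nonneg]

/-- The mass sits where `s sinh t` is of order one, that is, near `t = -log s`. -/
theorem le_abs_besselTail {k : ℕ} (hk : 0 ≤ k + μ) (hs : 0 < s) (hs' : s ≤ 1 / 2) :
    exp (-exp 1) / 4 ^ k * s ^ (-(k + μ)) ≤ |besselTail μ k s| := by
  have hlog : 0 ≤ -log s := neg_nonneg.2 (log_nonpos hs.le (by linarith))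
  have hsub : Ioc (-log s) (-log s + 1) ⊆ Ioi 0 := fun t ht => hlog.trans_lt ht.1
  have hint := (integrableOn_sinh_pow_mul_exp μ k hs).norm
  calc exp (-exp 1) / 4 ^ k * s ^ (-(k + μ))
      ≤ ∫ t in Ioc (-log s) (-log s + 1), ‖(-sinh t) ^ k * exp (μ * t - s * sinh t)‖ := by
        simpa using setIntegral_ge_of_const_le_real measurableSet_Ioc (by simp)
          (fun t ht => le_norm_sinh_pow_mul_exp hk hs hs' ht) (IntegrableOn.mono_set hint hsub)
    _ ≤ ∫ t in Ioi 0, ‖(-sinh t) ^ k * exp (μ * t - s * sinh t)‖ :=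
        setIntegral_mono_set hint (.of_forall fun _ => norm_nonneg _) hsub.eventuallyLE
    _ = |besselTail μ k s| := (abs_besselTail μ k s).symm

theorem rpow_isBigO_besselTail {k : ℕ} (hk : 0 ≤ k + μ) :
    (fun s : ℝ => s ^ (-(k + μ))) =O[𝓝[>] 0] besselTail μ k := by
  refine .of_bound (exp (-exp 1) / 4 ^ k)⁻¹ ?_
  filter_upwards [Ioc_mem_nhdsGT (one_half_pos (α := ℝ))] with s hs
  rw [norm_of_nonneg (rpow_nonneg hs.1.le _), ← div_eq_inv_mul, le_div_iff₀' (by positivity)]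
  exact le_abs_besselTail hk hs.1 hs.2

theorem besselArc_ode (ν a s : ℝ) :
    s ^ 2 * besselArc ν a 2 s + s * besselArc ν a 1 s + (s ^ 2 - ν ^ 2) * besselArc ν a 0 s =
      (ν - s) * sin (a - ν * π) - (s + ν) * sin a := by
  have hderiv : ∀ θ ∈ uIcc (0 : ℝ) π, HasDerivAt
      (fun θ => (s * cos θ + ν) * sin (s * sin θ - ν * θ + a))
      (s ^ 2 * (sin θ ^ 2 * cos (s * sin θ - ν * θ + a + (2 : ℕ) * (π / 2)))
        + s * (sin θ ^ 1 * cos (s * sin θ - ν * θ + a + (1 : ℕ) * (π / 2)))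
        + (s ^ 2 - ν ^ 2) * (sin θ ^ 0 * cos (s * sin θ - ν * θ + a + (0 : ℕ) * (π / 2)))) θ := by
    intro θ _
    have hfactor : HasDerivAt (fun θ => s * cos θ + ν) (s * -sin θ) θ :=
      ((hasDerivAt_cos θ).const_mul s).add_const _
    have hphase : HasDerivAt (fun θ => s * sin θ - ν * θ + a) (s * cos θ - ν * 1) θ :=
      (((hasDerivAt_sin θ).const_mul s).sub ((hasDerivAt_id θ).const_mul ν)).add_const _
    refine (hfactor.fun_mul hphase.sin).congr_deriv ?_
    rw [show ((2 : ℕ) : ℝ) * (π / 2) = π by push_cast; ring,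
      show ((1 : ℕ) : ℝ) * (π / 2) = π / 2 by push_cast; ring, cos_add_pi, cos_add_pi_div_two]
    push_cast
    rw [zero_mul, add_zero, sin_sq]
    ring
  have h := intervalIntegral.integral_eq_sub_of_hasDerivAt hderiv
    (Continuous.intervalIntegrable (by fun_prop) _ _)
  rw [intervalIntegral.integral_add (Continuous.intervalIntegrable (by fun_prop) _ _)
    (Continuous.intervalIntegrable (by fun_prop) _ _),
    intervalIntegral.integral_add (Continuous.intervalIntegrable (by fun_prop) _ _)
    (Continuous.intervalIntegrable (by fun_prop) _ _)] at h
  simp only [intervalIntegral.integral_const_mul] at h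
  rw [besselArc, besselArc, besselArc, h, sin_pi, sin_zero, cos_pi, cos_zero]
  ring_nf

theorem besselTail_ode (μ : ℝ) (hs : 0 < s) :
    s ^ 2 * besselTail μ 2 s + s * besselTail μ 1 s + (s ^ 2 - μ ^ 2) * besselTail μ 0 s =
      s + μ := by
  have hderiv : ∀ t ∈ Ici (0 : ℝ), HasDerivAt
      (fun t => -((s * cosh t + μ) * exp (μ * t - s * sinh t)))
      (s ^ 2 * ((-sinh t) ^ 2 * exp (μ * t - s * sinh t))
        + s * ((-sinh t) ^ 1 * exp (μ * t - s * sinh t))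
        + (s ^ 2 - μ ^ 2) * ((-sinh t) ^ 0 * exp (μ * t - s * sinh t))) t := by
    intro t _
    have hfactor : HasDerivAt (fun t => s * cosh t + μ) (s * sinh t) t :=
      ((hasDerivAt_cosh t).const_mul s).add_const _
    have hexponent : HasDerivAt (fun t => μ * t - s * sinh t) (μ * 1 - s * cosh t) t :=
      ((hasDerivAt_id t).const_mul μ).sub ((hasDerivAt_sinh t).const_mul s)
    refine (hfactor.fun_mul hexponent.exp).fun_neg.congr_deriv ?_
    linear_combination (s ^ 2 * exp (μ * t - s * sinh t)) * cosh_sq t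
  have hlim : Tendsto (fun t => -((s * cosh t + μ) * exp (μ * t - s * sinh t))) atTop (𝓝 0) := by
    have h := (((tendsto_exp_mul_sub_mul_sinh (μ + 1) hs).const_mul (s / 2)).add
      ((tendsto_exp_mul_sub_mul_sinh (μ - 1) hs).const_mul (s / 2))).add
      ((tendsto_exp_mul_sub_mul_sinh μ hs).const_mul μ) |>.neg
    simp only [mul_zero, add_zero, neg_zero] at h
    refine h.congr fun t => ?_
    rw [cosh_eq, show (μ + 1) * t - s * sinh t = t + (μ * t - s * sinh t) by ring,
      show (μ - 1) * t - s * sinh t = -t + (μ * t - s * sinh t) by ring, exp_add, exp_add]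
    ring
  have int₂ := (integrableOn_sinh_pow_mul_exp μ 2 hs).const_mul (s ^ 2)
  have int₁ := (integrableOn_sinh_pow_mul_exp μ 1 hs).const_mul s
  have int₀ := (integrableOn_sinh_pow_mul_exp μ 0 hs).const_mul (s ^ 2 - μ ^ 2)
  have h := integral_Ioi_of_hasDerivAt_of_tendsto' hderiv ((int₂.add int₁).add int₀) hlim
  rw [integral_add (by exact int₂.add int₁) int₀, integral_add int₂ int₁] at h
  simp only [integral_const_mul] at h
  rw [besselTail, besselTail, besselTail, h]
  simp

end SchlaefliIntegrals

section BesselEquation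

/-- `f` solves Bessel's equation `s² f'' + s f' + (s² - ν²) f = 0` on the half-line `s > 0`. -/
structure IsBesselSolution (ν : ℝ) (f : ℝ → ℝ) : Prop where
  differentiableAt : ∀ {s}, 0 < s → DifferentiableAt ℝ f s
  differentiableAt_deriv : ∀ {s}, 0 < s → DifferentiableAt ℝ (deriv f) s
  ode : ∀ {s}, 0 < s → s ^ 2 * deriv (deriv f) s + s * deriv f s + (s ^ 2 - ν ^ 2) * f s = 0

/-- The Wronskian of `f` and `g` in the normalization that is constant for Bessel's equation. -/
noncomputable def besselWronskian (f g : ℝ → ℝ) (s : ℝ) : ℝ :=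
  s * (f s * deriv g s - deriv f s * g s)

/-- The energy `u'² + u²` of `u = √s f`, which solves the perturbed harmonic oscillator equation
`u'' + (1 + (1/4 - ν²) / s²) u = 0` when `f` solves Bessel's equation. -/
noncomputable def besselEnergy (f : ℝ → ℝ) (s : ℝ) : ℝ :=
  s * ((deriv f s + f s / (2 * s)) ^ 2 + f s ^ 2)

variable {ν d s : ℝ} {f f' f'' g : ℝ → ℝ}

theorem IsBesselSolution.of_hasDerivAt (hf : ∀ s, 0 < s → HasDerivAt f (f' s) s)
    (hf' : ∀ s, 0 < s → HasDerivAt f' (f'' s) s)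
    (hode : ∀ s, 0 < s → s ^ 2 * f'' s + s * f' s + (s ^ 2 - ν ^ 2) * f s = 0) :
    IsBesselSolution ν f := by
  have hderiv : ∀ s, 0 < s → HasDerivAt (deriv f) (f'' s) s := fun s hs =>
    (hf' s hs).congr_of_eventuallyEq <| by
      filter_upwards [Ioi_mem_nhds hs] with x hx using (hf x hx).deriv
  refine ⟨fun hs => (hf _ hs).differentiableAt, fun hs => (hderiv _ hs).differentiableAt,
    fun hs => ?_⟩
  rw [(hderiv _ hs).deriv, (hf _ hs).deriv, hode _ hs]

theorem IsBesselSolution.wronskian_eq (hf : IsBesselSolution ν f) (hg : IsBesselSolution ν g)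
    (hs : 0 < s) : besselWronskian f g s = besselWronskian f g 1 := by
  have hderiv : ∀ s ∈ Ioi (0 : ℝ), HasDerivAt (besselWronskian f g) 0 s := fun s hs => by
    have hprod := ((hf.differentiableAt hs).hasDerivAt.mul
      (hg.differentiableAt_deriv hs).hasDerivAt).sub
      ((hf.differentiableAt_deriv hs).hasDerivAt.mul (hg.differentiableAt hs).hasDerivAt)
    refine ((hasDerivAt_id s).mul hprod).congr_deriv (mul_left_cancel₀ (ne_of_gt hs) ?_)
    simp only [Pi.sub_apply, Pi.mul_apply, id]
    linear_combination f s * hg.ode hs - g s * hf.ode hs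
  obtain ⟨w, hw⟩ := isOpen_Ioi.exists_is_const_of_deriv_eq_zero isPreconnected_Ioi
    (fun s hs => (hderiv s hs).differentiableAt.differentiableWithinAt)
    fun s hs => (hderiv s hs).deriv
  rw [hw s hs, hw 1 (mem_Ioi.2 one_pos)]

theorem IsBesselSolution.hasDerivAt_energy (hf : IsBesselSolution ν f) (hs : 0 < s) :
    HasDerivAt (besselEnergy f)
      (2 * (ν ^ 2 - 1 / 4) * f s * (deriv f s + f s / (2 * s)) / s) s := by
  have hderiv := (hf.differentiableAt hs).hasDerivAt
  have hquot := hderiv.div ((hasDerivAt_id s).const_mul 2) (by simpa using hs.ne')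
  have hsum := ((hf.differentiableAt_deriv hs).hasDerivAt.add hquot).pow 2
  refine ((hasDerivAt_id s).mul (hsum.add (hderiv.pow 2))).congr_deriv ?_
  have hode : deriv (deriv f) s = -(deriv f s / s) - (1 - ν ^ 2 / s ^ 2) * f s := by
    field_simp
    linear_combination hf.ode hs
  have hs₀ : s ≠ 0 := hs.ne'
  simp only [Pi.add_apply, Pi.pow_apply, Pi.div_apply, id, hode, Nat.cast_ofNat,
    Nat.add_one_sub_one, pow_one]
  field_simp
  ring

theorem IsBesselSolution.antitoneOn_energy_mul_exp (hf : IsBesselSolution ν f) :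
    AntitoneOn (fun s => besselEnergy f s * exp (|ν ^ 2 - 1 / 4| / s)) (Ioi 0) := by
  have hderiv : ∀ s ∈ Ioi (0 : ℝ), HasDerivAt
      (fun s => besselEnergy f s * exp (|ν ^ 2 - 1 / 4| / s))
      (exp (|ν ^ 2 - 1 / 4| / s) * (2 * (ν ^ 2 - 1 / 4) * f s * (deriv f s + f s / (2 * s)) -
        |ν ^ 2 - 1 / 4| * ((deriv f s + f s / (2 * s)) ^ 2 + f s ^ 2)) / s) s := fun s hs => by
    have hs₀ : s ≠ 0 := ne_of_gt hs
    have hexp := ((hasDerivAt_inv hs₀).const_mul |ν ^ 2 - 1 / 4|).exp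
    refine ((hf.hasDerivAt_energy hs).mul hexp).congr_deriv ?_
    rw [besselEnergy, ← div_eq_mul_inv]
    field_simp
    ring
  refine antitoneOn_of_deriv_nonpos (convex_Ioi 0)
    (fun s hs => (hderiv s hs).continuousAt.continuousWithinAt)
    (fun s hs => (hderiv s (interior_subset hs)).differentiableAt.differentiableWithinAt)
    fun s hs => ?_
  rw [(hderiv s (interior_subset hs)).deriv]
  have hs₀ : 0 ≤ s := le_of_lt (interior_subset hs : s ∈ Ioi 0)
  refine div_nonpos_of_nonpos_of_nonneg
    (mul_nonpos_of_nonneg_of_nonpos (exp_pos _).le (sub_nonpos.2 ?_)) hs₀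
  generalize deriv f s + f s / (2 * s) = p
  calc 2 * (ν ^ 2 - 1 / 4) * f s * p ≤ |2 * (ν ^ 2 - 1 / 4) * f s * p| := le_abs_self _
    _ = |ν ^ 2 - 1 / 4| * (2 * |p| * |f s|) := by simp only [abs_mul, abs_two]; ring
    _ ≤ |ν ^ 2 - 1 / 4| * (p ^ 2 + f s ^ 2) := by
      gcongr
      simpa only [sq_abs] using two_mul_le_add_sq |p| |f s|

theorem IsBesselSolution.energy_le (hf : IsBesselSolution ν f) (hd : 0 < d) (hs : d ≤ s) :
    besselEnergy f s ≤ besselEnergy f d * exp (|ν ^ 2 - 1 / 4| / d) := by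
  have hs₀ : 0 < s := hd.trans_le hs
  refine le_trans ?_ (hf.antitoneOn_energy_mul_exp hd hs₀ hs)
  refine le_mul_of_one_le_right ?_ (one_le_exp (by positivity))
  rw [besselEnergy]
  positivity

theorem besselWronskian_sq_le (f g : ℝ → ℝ) (s : ℝ) :
    besselWronskian f g s ^ 2 ≤
      s * (f s ^ 2 + g s ^ 2) * (besselEnergy f s + besselEnergy g s) := by
  set p := deriv f s + f s / (2 * s) with hp
  set q := deriv g s + g s / (2 * s) with hq
  calc besselWronskian f g s ^ 2 = s ^ 2 * (f s * q - p * g s) ^ 2 := by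
        rw [besselWronskian, hp, hq]
        ring
    _ ≤ s ^ 2 * ((f s ^ 2 + g s ^ 2) * (p ^ 2 + q ^ 2 + (f s ^ 2 + g s ^ 2))) := by
        gcongr
        nlinarith [sq_nonneg (f s * p + g s * q), sq_nonneg (f s ^ 2 + g s ^ 2)]
    _ = s * (f s ^ 2 + g s ^ 2) * (besselEnergy f s + besselEnergy g s) := by
        rw [besselEnergy, besselEnergy]
        ring

theorem IsBesselSolution.inv_sqrt_isBigO (hf : IsBesselSolution ν f) (hg : IsBesselSolution ν g)
    (hw : besselWronskian f g 1 ≠ 0) (hd : 0 < d) :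
    (fun s => (√(f s ^ 2 + g s ^ 2))⁻¹) =O[𝓟 (Ici d)] fun s => √s := by
  set B := (besselEnergy f d + besselEnergy g d) * exp (|ν ^ 2 - 1 / 4| / d) with hB
  refine isBigO_principal.2 ⟨√B / |besselWronskian f g 1|, fun s hs => ?_⟩
  have hs₀ : 0 < s := lt_of_lt_of_le hd hs
  have hle : besselWronskian f g 1 ^ 2 ≤ s * (f s ^ 2 + g s ^ 2) * B := by
    rw [← hf.wronskian_eq hg hs₀, hB, add_mul]
    refine (besselWronskian_sq_le f g s).trans ?_
    gcongr
    exacts [hf.energy_le hd hs, hg.energy_le hd hs]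
  have hsqrt : |besselWronskian f g 1| ≤ √s * √(f s ^ 2 + g s ^ 2) * √B := by
    rw [← sqrt_sq_eq_abs, ← sqrt_mul hs₀.le, ← sqrt_mul (by positivity)]
    exact sqrt_le_sqrt hle
  have hmod : 0 < √(f s ^ 2 + g s ^ 2) := by
    refine (sqrt_nonneg _).lt_of_ne' fun h0 => hw ?_
    simpa [h0] using hsqrt
  rw [norm_of_nonneg (by positivity), norm_of_nonneg (by positivity), inv_le_iff_one_le_mul₀ hmod,
    div_mul_eq_mul_div, div_mul_eq_mul_div, le_div_iff₀ (abs_pos.2 hw)]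
  linarith

end BesselEquation

section OriginBehaviour

theorem tendsto_rpow_nhdsGT_zero {p : ℝ} (hp : 0 < p) :
    Tendsto (fun s : ℝ => s ^ p) (𝓝[>] 0) (𝓝 0) := by
  simpa [zero_rpow hp.ne'] using
    (continuousAt_rpow_const 0 p (.inr hp.le)).tendsto.mono_left nhdsWithin_le_nhds

section RpowDerivBound

variable {E : Type*} [NormedAddCommGroup E] [NormedSpace ℝ E] {r r' : ℝ → E} {p : ℝ}

theorem norm_le_add_mul_rpow_sub_rpow {a b C : ℝ} (hp : 0 < p) (ha : 0 < a) (hab : a ≤ b)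
    (hderiv : ∀ x ∈ Icc a b, HasDerivAt r (r' x) x)
    (hbound : ∀ x ∈ Icc a b, ‖r' x‖ ≤ C * x ^ (p - 1)) :
    ‖r b‖ ≤ ‖r a‖ + C / p * (b ^ p - a ^ p) := by
  refine image_norm_le_of_norm_deriv_right_le_deriv_boundary'
    (f' := r') (B := fun x => ‖r a‖ + C / p * (x ^ p - a ^ p))
    (B' := fun x => C / p * (p * x ^ (p - 1)))
    (fun x hx => (hderiv x hx).continuousAt.continuousWithinAt)
    (fun x hx => (hderiv x (Ico_subset_Icc_self hx)).hasDerivWithinAt) (by simp)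
    (fun x _ => ?_) (fun x hx => ?_) (fun x hx => ?_) (right_mem_Icc.2 hab)
  · have := continuousAt_rpow_const x p (.inr hp.le)
    exact (by fun_prop : ContinuousAt _ x).continuousWithinAt
  · exact ((((hasDerivAt_rpow_const (.inl (ha.trans_le hx.1).ne')).sub_const _).const_mul
      _).const_add _).hasDerivWithinAt
  · refine (hbound x (Ico_subset_Icc_self hx)).trans_eq ?_
    field_simp

/-- The factor `w` makes the case `w = 0` say that `r` vanishes near `0`. -/
theorem isBigO_rpow_of_hasDerivAt {w : ℝ} (hp : 0 < p) (hr : Tendsto r (𝓝[>] 0) (𝓝 0))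
    (hderiv : ∀ᶠ s in 𝓝[>] 0, HasDerivAt r (r' s) s)
    (hr' : r' =O[𝓝[>] 0] fun s => w * s ^ (p - 1)) :
    r =O[𝓝[>] 0] fun s => w * s ^ p := by
  obtain ⟨K, hK⟩ := hr'.bound
  obtain ⟨δ, hδ, hIoo⟩ := mem_nhdsGT_iff_exists_Ioo_subset.1 (hderiv.and hK)
  have hincr : ∀ s ∈ Ioo 0 δ, ∀ ε ∈ Ioo 0 s,
      ‖r s‖ ≤ ‖r ε‖ + K * |w| / p * (s ^ p - ε ^ p) := fun s hs ε hε => by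
    have hmem : ∀ x ∈ Icc ε s, x ∈ Ioo 0 δ := fun x hx =>
      ⟨hε.1.trans_le hx.1, hx.2.trans_lt hs.2⟩
    refine norm_le_add_mul_rpow_sub_rpow hp hε.1 hε.2.le (fun x hx => (hIoo (hmem x hx)).1)
      fun x hx => (hIoo (hmem x hx)).2.trans_eq ?_
    rw [norm_mul, norm_eq_abs w, norm_of_nonneg (rpow_nonneg (hmem x hx).1.le _), mul_assoc]
  have hlim : ∀ s, Tendsto (fun ε => ‖r ε‖ + K * |w| / p * (s ^ p - ε ^ p)) (𝓝[>] 0)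
      (𝓝 (K * |w| / p * s ^ p)) := fun s => by
    simpa using hr.norm.add (((tendsto_rpow_nhdsGT_zero hp).const_sub (s ^ p)).const_mul
      (K * |w| / p))
  refine .of_bound (K / p) ?_
  filter_upwards [Ioo_mem_nhdsGT hδ] with s hs
  rw [norm_mul, norm_eq_abs w, norm_of_nonneg (rpow_nonneg hs.1.le _), ← mul_assoc,
    div_mul_eq_mul_div]
  refine ge_of_tendsto (hlim s) ?_
  filter_upwards [Ioo_mem_nhdsGT hs.1] with ε hε using hincr s hs ε hε

end RpowDerivBound

variable {ν s : ℝ} {f g : ℝ → ℝ}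

theorem IsBesselSolution.hasDerivAt_div (hf : IsBesselSolution ν f) (hg : IsBesselSolution ν g)
    (hs : 0 < s) (hgs : g s ≠ 0) :
    HasDerivAt (fun s => f s / g s) (-besselWronskian f g 1 / (s * g s ^ 2)) s := by
  refine ((hf.differentiableAt hs).hasDerivAt.fun_div (hg.differentiableAt hs).hasDerivAt
    hgs).congr_deriv ?_
  have hs₀ : s ≠ 0 := hs.ne'
  rw [← hf.wronskian_eq hg hs, besselWronskian]
  field_simp
  ring

theorem eventually_ne_zero_of_rpow_isBigO {p : ℝ}
    (hgl : (fun s => s ^ p) =O[𝓝[>] 0] g) : ∀ᶠ s in 𝓝[>] 0, g s ≠ 0 := by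
  filter_upwards [hgl.eq_zero_imp, self_mem_nhdsWithin] with s hs hpos h0
  exact (rpow_pos_of_pos hpos p).ne' (hs h0)

theorem inv_isBigO_rpow (hgl : (fun s => s ^ (-ν)) =O[𝓝[>] 0] g) :
    (fun s => (g s)⁻¹) =O[𝓝[>] 0] fun s => s ^ ν := by
  refine (hgl.inv_rev ?_).congr' .rfl ?_
  · filter_upwards [self_mem_nhdsWithin] with s hs h0
    exact absurd h0 (rpow_pos_of_pos hs _).ne'
  · filter_upwards [self_mem_nhdsWithin] with s hs
    rw [← rpow_neg (le_of_lt hs), neg_neg]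

theorem IsBesselSolution.div_isBigO (hν : 0 < ν) (hf : IsBesselSolution ν f)
    (hg : IsBesselSolution ν g) (hfb : f =O[𝓝[>] 0] fun _ => (1 : ℝ))
    (hgl : (fun s => s ^ (-ν)) =O[𝓝[>] 0] g) :
    (fun s => f s / g s) =O[𝓝[>] 0] fun s => besselWronskian f g 1 * s ^ (2 * ν) := by
  have hinv := inv_isBigO_rpow hgl
  have hzero : Tendsto (fun s => f s / g s) (𝓝[>] 0) (𝓝 0) := by
    refine IsBigO.trans_tendsto ?_ (tendsto_rpow_nhdsGT_zero hν)
    simpa [div_eq_mul_inv] using hfb.mul hinv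
  refine isBigO_rpow_of_hasDerivAt (mul_pos two_pos hν) hzero
    (r' := fun s => -besselWronskian f g 1 / (s * g s ^ 2)) ?_ ?_
  · filter_upwards [self_mem_nhdsWithin, eventually_ne_zero_of_rpow_isBigO hgl] with s hs hgs
      using hf.hasDerivAt_div hg hs hgs
  · have h := ((isBigO_refl (fun s : ℝ => besselWronskian f g 1 * s⁻¹) (𝓝[>] 0)).mul
      (hinv.pow 2)).neg_left
    refine h.congr' (.of_forall fun s => by ring) ?_
    filter_upwards [self_mem_nhdsWithin] with s hs
    rw [mul_comm 2 ν, rpow_sub_one (ne_of_gt hs), rpow_mul (le_of_lt hs), rpow_two]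
    ring

theorem div_isBigO_inv_sqrt {α : Type*} {l : Filter α} {x M : α → ℝ}
    (h : ∀ a, x a ^ 2 ≤ M a) : (fun a => x a / M a) =O[l] fun a => (√(M a))⁻¹ := by
  refine .of_bound' (.of_forall fun a => ?_)
  have hM : 0 ≤ M a := (sq_nonneg _).trans (h a)
  rw [norm_div, norm_of_nonneg hM, norm_of_nonneg (inv_nonneg.2 (sqrt_nonneg _)), ← sqrt_div_self]
  gcongr
  exact abs_le_sqrt (h a)

theorem inv_sqrt_sq_add_sq_isBigO (hgl : (fun s => s ^ (-ν)) =O[𝓝[>] 0] g) :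
    (fun s => (√(f s ^ 2 + g s ^ 2))⁻¹) =O[𝓝[>] 0] fun s => s ^ ν := by
  refine inv_isBigO_rpow (hgl.trans (.of_bound' (.of_forall fun s => ?_)))
  rw [norm_of_nonneg (sqrt_nonneg _)]
  exact abs_le_sqrt (le_add_of_nonneg_left (sq_nonneg _))

theorem IsBesselSolution.div_sq_add_sq_isBigO (hν : 0 < ν) (hf : IsBesselSolution ν f)
    (hg : IsBesselSolution ν g) (hfb : f =O[𝓝[>] 0] fun _ => (1 : ℝ))
    (hgl : (fun s => s ^ (-ν)) =O[𝓝[>] 0] g) :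
    (fun s => f s / (f s ^ 2 + g s ^ 2)) =O[𝓝[>] 0] fun s => s ^ (3 * ν) := by
  have hdiv := ((hf.div_isBigO hν hg hfb hgl).of_const_mul_right).mul
    ((div_isBigO_inv_sqrt fun s => le_add_of_nonneg_left (sq_nonneg (f s))).trans
      (inv_sqrt_sq_add_sq_isBigO hgl))
  refine hdiv.congr' ?_ ?_
  · filter_upwards [eventually_ne_zero_of_rpow_isBigO hgl] with s hs
    rw [div_mul_div_cancel₀ hs]
  · filter_upwards [self_mem_nhdsWithin] with s hs
    rw [← rpow_add hs]
    ring_nf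

end OriginBehaviour

section BesselFunctions

variable {ν d s : ℝ}

-- In `besselJ` and `besselY` the integral over `θ` extends over the subtraction that follows it, so
-- the hyperbolic part, which does not depend on `θ`, is averaged over `[0, π]`.
theorem besselJ_eq (ν s : ℝ) :
    besselJ ν s = π⁻¹ * (besselArc ν 0 0 s - sin (ν * π) * besselTail (-ν) 0 s) := by
  have harc : ∫ θ in 0..π, cos (s * sin θ - ν * θ) = besselArc ν 0 0 s := by simp [besselArc]
  have htail : ∫ t in Ioi 0, exp (-s * sinh t - ν * t) = besselTail (-ν) 0 s :=
    integral_congr_ae (.of_forall fun t => by ring_nf)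
  rw [besselJ, intervalIntegral.integral_sub (Continuous.intervalIntegrable (by fun_prop) _ _)
    intervalIntegrable_const, intervalIntegral.integral_const, smul_eq_mul, harc, htail]
  field_simp
  ring

theorem besselY_eq (ν : ℝ) (hs : 0 < s) :
    besselY ν s = π⁻¹ * (besselArc ν (-(π / 2)) 0 s - besselTail ν 0 s -
      cos (ν * π) * besselTail (-ν) 0 s) := by
  have harc : ∫ θ in 0..π, sin (s * sin θ - ν * θ) = besselArc ν (-(π / 2)) 0 s := by
    simp [besselArc, ← sub_eq_add_neg, cos_sub_pi_div_two]
  have htail : ∫ t in Ioi 0, (exp (ν * t) + exp (-ν * t) * cos (ν * π)) * exp (-s * sinh t) =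
      besselTail ν 0 s + cos (ν * π) * besselTail (-ν) 0 s := by
    have hint := fun μ => integrableOn_sinh_pow_mul_exp μ 0 hs
    rw [besselTail, besselTail, ← integral_const_mul,
      ← integral_add (hint ν) ((hint (-ν)).const_mul _)]
    refine integral_congr_ae (.of_forall fun t => ?_)
    simp only [pow_zero, one_mul, sub_eq_add_neg, exp_add]
    ring_nf
  rw [besselY, intervalIntegral.integral_sub (Continuous.intervalIntegrable (by fun_prop) _ _)
    intervalIntegrable_const, intervalIntegral.integral_const, smul_eq_mul, harc, htail]
  field_simp
  ring

theorem isBesselSolution_besselJ (ν : ℝ) : IsBesselSolution ν (besselJ ν) := by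
  rw [funext (besselJ_eq ν)]
  refine .of_hasDerivAt
    (f' := fun s => π⁻¹ * (besselArc ν 0 1 s - sin (ν * π) * besselTail (-ν) 1 s))
    (f'' := fun s => π⁻¹ * (besselArc ν 0 2 s - sin (ν * π) * besselTail (-ν) 2 s))
    (fun s hs => ((hasDerivAt_besselArc ν 0 0 s).sub
      ((hasDerivAt_besselTail (-ν) 0 hs).const_mul _)).const_mul _)
    (fun s hs => ((hasDerivAt_besselArc ν 0 1 s).sub
      ((hasDerivAt_besselTail (-ν) 1 hs).const_mul _)).const_mul _) fun s hs => ?_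
  have harc := besselArc_ode ν 0 s
  rw [zero_sub, sin_neg, sin_zero] at harc
  linear_combination π⁻¹ * harc - π⁻¹ * sin (ν * π) * besselTail_ode (-ν) hs

theorem isBesselSolution_besselY (ν : ℝ) : IsBesselSolution ν (besselY ν) := by
  have hderiv : ∀ k s, 0 < s → HasDerivAt
      (fun s => π⁻¹ * (besselArc ν (-(π / 2)) k s - besselTail ν k s -
        cos (ν * π) * besselTail (-ν) k s))
      (π⁻¹ * (besselArc ν (-(π / 2)) (k + 1) s - besselTail ν (k + 1) s -
        cos (ν * π) * besselTail (-ν) (k + 1) s)) s := fun k s hs =>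
    (((hasDerivAt_besselArc ν _ k s).sub (hasDerivAt_besselTail ν k hs)).sub
      ((hasDerivAt_besselTail (-ν) k hs).const_mul _)).const_mul _
  refine .of_hasDerivAt (fun s hs => (hderiv 0 s hs).congr_of_eventuallyEq ?_) (hderiv 1)
    fun s hs => ?_
  · filter_upwards [Ioi_mem_nhds hs] with x hx using besselY_eq ν hx
  · have harc := besselArc_ode ν (-(π / 2)) s
    rw [← neg_add', sin_neg, sin_neg, add_comm (π / 2), sin_add_pi_div_two, sin_pi_div_two] at harc
    rw [besselY_eq ν hs]
    linear_combination π⁻¹ * harc - π⁻¹ * besselTail_ode ν hs -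
      π⁻¹ * cos (ν * π) * besselTail_ode (-ν) hs

theorem besselTail_zero_isBigO_one {μ : ℝ} (hμ : μ < 0) :
    besselTail μ 0 =O[𝓝[>] 0] fun _ => (1 : ℝ) := by
  refine .of_bound (-1 / μ) ?_
  filter_upwards [self_mem_nhdsWithin] with s hs
  simpa using abs_besselTail_zero_le hμ hs

theorem besselArc_isBigO_one (ν a : ℝ) (k : ℕ) (l : Filter ℝ) :
    besselArc ν a k =O[l] fun _ => (1 : ℝ) :=
  .of_bound π (.of_forall fun s => by simpa using abs_besselArc_le ν a k s)

theorem besselJ_isBigO_one (hν : 0 < ν) : besselJ ν =O[𝓝[>] 0] fun _ => (1 : ℝ) := by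
  rw [funext (besselJ_eq ν)]
  exact ((besselArc_isBigO_one ν 0 0 _).sub
    ((besselTail_zero_isBigO_one (neg_lt_zero.2 hν)).const_mul_left _)).const_mul_left _

theorem rpow_neg_isBigO_besselY (hν : 0 < ν) :
    (fun s => s ^ (-ν)) =O[𝓝[>] 0] besselY ν := by
  have htail : (fun s => s ^ (-ν)) =O[𝓝[>] 0] besselTail ν 0 := by
    simpa using rpow_isBigO_besselTail (k := 0) (μ := ν) (by simpa using hν.le)
  have hrest : (fun s => besselArc ν (-(π / 2)) 0 s - cos (ν * π) * besselTail (-ν) 0 s)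
      =O[𝓝[>] 0] fun _ => (1 : ℝ) := (besselArc_isBigO_one ν _ 0 _).sub
    ((besselTail_zero_isBigO_one (neg_lt_zero.2 hν)).const_mul_left _)
  have hone : (fun _ => (1 : ℝ)) =o[𝓝[>] 0] besselTail ν 0 := by
    refine IsLittleO.trans_isBigO (isLittleO_const_left.2 (.inr ?_)) htail
    exact tendsto_norm_atTop_atTop.comp (tendsto_rpow_neg_nhdsGT_zero (neg_lt_zero.2 hν))
  have hsum := htail.trans (hrest.trans_isLittleO hone).neg_left.right_isBigO_add
  refine (hsum.const_mul_right (inv_ne_zero pi_ne_zero)).neg_right.congr' .rfl ?_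
  filter_upwards [self_mem_nhdsWithin] with s hs
  rw [besselY_eq ν hs]
  ring

theorem integral_sin_pow_mul_cos_succ (n : ℕ) :
    ∫ θ in 0..π, sin θ ^ (n + 1) * cos ((n + 1) * (π / 2 - θ)) =
      (∫ θ in 0..π, sin θ ^ n * cos (n * (π / 2 - θ))) / 2 := by
  have hderiv : ∀ θ ∈ uIcc 0 π, HasDerivAt
      (fun θ => -(2 * (n + 1 : ℝ))⁻¹ * (sin θ ^ (n + 1) * sin ((n + 1) * (π / 2 - θ))))
      (sin θ ^ (n + 1) * cos ((n + 1) * (π / 2 - θ)) -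
        sin θ ^ n * cos (n * (π / 2 - θ)) / 2) θ := fun θ _ => by
    have hphase : HasDerivAt (fun θ => (n + 1) * (π / 2 - θ)) ((n + 1) * -1 : ℝ) θ :=
      ((hasDerivAt_id θ).const_sub _).const_mul _
    refine ((((hasDerivAt_sin θ).pow (n + 1)).mul hphase.sin).const_mul _).congr_deriv ?_
    have hcos : cos (n * (π / 2 - θ)) =
        cos ((n + 1) * (π / 2 - θ)) * sin θ + sin ((n + 1) * (π / 2 - θ)) * cos θ := by
      rw [← cos_pi_div_two_sub θ, ← sin_pi_div_two_sub θ, ← cos_sub]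
      ring_nf
    rw [hcos]
    push_cast
    field_simp
    simp only [Pi.pow_apply]
    ring
  have h := intervalIntegral.integral_eq_sub_of_hasDerivAt hderiv
    (Continuous.intervalIntegrable (by fun_prop) _ _)
  rw [intervalIntegral.integral_sub (Continuous.intervalIntegrable (by fun_prop) _ _)
    (Continuous.intervalIntegrable (by fun_prop) _ _), intervalIntegral.integral_div] at h
  simp only [sin_pi, sin_zero, zero_pow n.succ_ne_zero, zero_mul, mul_zero, sub_self] at h
  exact sub_eq_zero.1 h

theorem integral_sin_pow_mul_cos (n : ℕ) :
    ∫ θ in 0..π, sin θ ^ n * cos (n * (π / 2 - θ)) = π / 2 ^ n := by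
  induction n with
  | zero => simp
  | succ n ih =>
    push_cast
    rw [integral_sin_pow_mul_cos_succ, ih, pow_succ, div_div]

theorem besselArc_natCast_zero (n : ℕ) : besselArc n 0 n 0 = π / 2 ^ n := by
  rw [← integral_sin_pow_mul_cos, besselArc]
  exact intervalIntegral.integral_congr fun θ _ => by ring_nf

theorem besselArc_eq_mul_besselTail (hJ : ∀ s ∈ Ioo 0 d, besselJ ν s = 0) (k : ℕ) :
    ∀ s ∈ Ioo 0 d, besselArc ν 0 k s = sin (ν * π) * besselTail (-ν) k s := by
  induction k with
  | zero =>
    intro s hs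
    have h := hJ s hs
    rwa [besselJ_eq, mul_eq_zero_iff_left (inv_ne_zero pi_ne_zero), sub_eq_zero] at h
  | succ k ih =>
    intro s hs
    refine (hasDerivAt_besselArc ν 0 k s).unique
      (((hasDerivAt_besselTail (-ν) k hs.1).const_mul _).congr_of_eventuallyEq ?_)
    filter_upwards [Ioo_mem_nhds hs.1 hs.2] with x hx using ih x hx

/-- High derivatives of the hyperbolic part blow up at the origin while those of the circular part
stay bounded, so `J_ν` can only vanish near `0` if the hyperbolic part is absent. -/
theorem sin_mul_pi_eq_zero_of_besselJ_eq_zero (hd : 0 < d) (hJ : ∀ s ∈ Ioo 0 d, besselJ ν s = 0) :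
    sin (ν * π) = 0 := by
  by_contra hsin
  obtain ⟨k, hk⟩ := exists_nat_gt ν
  have htail : besselTail (-ν) k =O[𝓝[>] 0] fun _ => (1 : ℝ) := by
    refine ((besselArc_isBigO_one ν 0 k _).const_mul_left (sin (ν * π))⁻¹).congr' ?_ .rfl
    filter_upwards [Ioo_mem_nhdsGT hd] with s hs
    rw [besselArc_eq_mul_besselTail hJ k s hs, inv_mul_cancel_left₀ hsin]
  have hbounded := (rpow_isBigO_besselTail (k := k) (μ := -ν) (by linarith)).trans htail
  refine not_isBoundedUnder_of_tendsto_atTop ?_ ((isBigO_one_iff ℝ).1 hbounded)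
  exact tendsto_norm_atTop_atTop.comp (tendsto_rpow_neg_nhdsGT_zero (by linarith))

theorem frequently_besselJ_ne_zero (hν : 0 ≤ ν) : ∃ᶠ s in 𝓝[>] 0, besselJ ν s ≠ 0 := by
  intro hJ
  obtain ⟨d, hd, hIoo⟩ := mem_nhdsGT_iff_exists_Ioo_subset.1 hJ
  have hzero : ∀ s ∈ Ioo 0 d, besselJ ν s = 0 := fun s hs => not_not.1 (hIoo hs)
  have hsin := sin_mul_pi_eq_zero_of_besselJ_eq_zero hd hzero
  obtain ⟨n, hn⟩ : ∃ n : ℕ, (n : ℝ) = ν := by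
    obtain ⟨m, hm⟩ := sin_eq_zero_iff.1 hsin
    have hmν := mul_right_cancel₀ pi_ne_zero hm
    lift m to ℕ using by exact_mod_cast hmν ▸ hν
    exact ⟨m, by exact_mod_cast hmν⟩
  have hlim : Tendsto (besselArc ν 0 n) (𝓝[>] 0) (𝓝 (besselArc ν 0 n 0)) :=
    (hasDerivAt_besselArc ν 0 n 0).continuousAt.tendsto.mono_left nhdsWithin_le_nhds
  have harc : besselArc ν 0 n 0 = 0 := tendsto_nhds_unique hlim <|
    tendsto_const_nhds.congr' <| by
      filter_upwards [Ioo_mem_nhdsGT hd] with s hs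
      rw [besselArc_eq_mul_besselTail hzero n s hs, hsin, zero_mul]
  rw [← hn, besselArc_natCast_zero] at harc
  exact (by positivity : π / 2 ^ n ≠ 0) harc

theorem besselWronskian_besselJ_besselY_ne_zero (hν : 0 < ν) :
    besselWronskian (besselJ ν) (besselY ν) 1 ≠ 0 := fun hw => by
  have hdiv := (isBesselSolution_besselJ ν).div_isBigO hν (isBesselSolution_besselY ν)
    (besselJ_isBigO_one hν) (rpow_neg_isBigO_besselY hν)
  simp only [hw, zero_mul] at hdiv
  refine frequently_besselJ_ne_zero hν.le ?_
  filter_upwards [isBigO_zero_right_iff.1 hdiv,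
    eventually_ne_zero_of_rpow_isBigO (rpow_neg_isBigO_besselY hν)] with s hs hY
  exact not_not.2 ((div_eq_zero_iff.1 hs).resolve_right hY)

theorem besselJ_sq_add_besselY_sq_pos (hν : 0 < ν) (hs : 0 < s) :
    0 < besselJ ν s ^ 2 + besselY ν s ^ 2 := by
  refine (by positivity : 0 ≤ besselJ ν s ^ 2 + besselY ν s ^ 2).lt_of_ne' fun h0 => ?_
  obtain ⟨hJ, hY⟩ := (add_eq_zero_iff_of_nonneg (sq_nonneg _) (sq_nonneg _)).1 h0
  apply besselWronskian_besselJ_besselY_ne_zero hν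
  rw [← (isBesselSolution_besselJ ν).wronskian_eq (isBesselSolution_besselY ν) hs, besselWronskian,
    pow_eq_zero_iff two_ne_zero |>.1 hJ, pow_eq_zero_iff two_ne_zero |>.1 hY]
  ring

end BesselFunctions

section Majorants

/-- The bound for `|J_ν cos νπ - Y_ν sin νπ| / (J_ν² + Y_ν²)`, up to a constant; it is comparable
to `max (s^ν) √s`. -/
noncomputable def linearFormMajorant (ν s : ℝ) : ℝ :=
  s ^ ν * (1 + s ^ (1 - 2 * ν)) / (1 + s ^ (1 / 2 - ν))

/-- The bound for `|J_ν| / (J_ν² + Y_ν²)`, up to a constant; for `0 < ν ≤ 1/2` it is comparable to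
`s^{3ν}` near `0` and to `√s` near infinity. -/
noncomputable def besselJMajorant (ν s : ℝ) : ℝ :=
  s ^ (3 * ν) * (1 + s ^ (1 - 2 * ν)) / (1 + s ^ (1 / 2 + ν))

variable {ν d s : ℝ}

theorem linearFormMajorant_nonneg (ν : ℝ) (hs : 0 ≤ s) : 0 ≤ linearFormMajorant ν s := by
  rw [linearFormMajorant]
  positivity

theorem linearFormMajorant_eq (ν : ℝ) (hs : 0 ≤ s) :
    linearFormMajorant ν s = s ^ ν * (1 + (s ^ (1 / 2 - ν)) ^ 2) / (1 + s ^ (1 / 2 - ν)) := by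
  rw [linearFormMajorant, ← rpow_mul_natCast hs]
  push_cast
  ring_nf

theorem besselJMajorant_nonneg (ν : ℝ) (hs : 0 ≤ s) : 0 ≤ besselJMajorant ν s := by
  rw [besselJMajorant]
  positivity

theorem isBigO_principal_Ioi_zero {q R : ℝ → ℝ} (h₀ : q =O[𝓝[>] 0] R)
    (hd : ∀ d, 0 < d → q =O[𝓟 (Ici d)] R) : q =O[𝓟 (Ioi 0)] R := by
  obtain ⟨K, hK⟩ := h₀.bound
  obtain ⟨δ, hδ, hIoo⟩ := mem_nhdsGT_iff_exists_Ioo_subset.1 hK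
  have hnear : q =O[𝓟 (Ioo 0 δ)] R := isBigO_principal.2 ⟨K, hIoo⟩
  have hglue := hnear.sup (hd δ hδ)
  rwa [sup_principal, Ioo_union_Ici_eq_Ioi hδ] at hglue

theorem rpow_isBigO_linearFormMajorant (ν : ℝ) :
    (fun s : ℝ => s ^ ν) =O[𝓟 (Ioi 0)] linearFormMajorant ν := by
  refine isBigO_principal.2 ⟨2, fun s hs => ?_⟩
  replace hs : 0 < s := hs
  rw [norm_of_nonneg (by positivity), norm_of_nonneg (linearFormMajorant_nonneg ν hs.le),
    linearFormMajorant_eq ν hs.le, ← mul_div_assoc, le_div_iff₀ (by positivity)]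
  generalize s ^ (1 / 2 - ν) = x
  calc s ^ ν * (1 + x) ≤ s ^ ν * (2 * (1 + x ^ 2)) := by
        gcongr
        nlinarith [sq_nonneg (x - 1)]
    _ = 2 * (s ^ ν * (1 + x ^ 2)) := by ring

theorem sqrt_isBigO_linearFormMajorant (ν : ℝ) :
    sqrt =O[𝓟 (Ioi 0)] linearFormMajorant ν := by
  refine isBigO_principal.2 ⟨2, fun s hs => ?_⟩
  replace hs : 0 < s := hs
  rw [norm_of_nonneg (by positivity), norm_of_nonneg (linearFormMajorant_nonneg ν hs.le),
    linearFormMajorant_eq ν hs.le, ← mul_div_assoc, le_div_iff₀ (by positivity), sqrt_eq_rpow,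
    ← add_sub_cancel ν (1 / 2), rpow_add hs]
  simp only [add_sub_cancel]
  generalize s ^ (1 / 2 - ν) = x
  calc s ^ ν * x * (1 + x) = s ^ ν * (x + x ^ 2) := by ring
    _ ≤ s ^ ν * (2 * (1 + x ^ 2)) := by
        gcongr
        nlinarith [sq_nonneg (x - 1)]
    _ = 2 * (s ^ ν * (1 + x ^ 2)) := by ring

theorem rpow_isBigO_besselJMajorant (hν : -(1 / 2) ≤ ν) :
    (fun s : ℝ => s ^ (3 * ν)) =O[𝓝[>] 0] besselJMajorant ν := by
  refine .of_bound 2 ?_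
  filter_upwards [Ioc_mem_nhdsGT one_pos] with s ⟨hs, hs₁⟩
  have hle : s ^ (1 / 2 + ν) ≤ 1 := rpow_le_one hs.le hs₁ (by linarith)
  have hpos : 0 ≤ s ^ (1 - 2 * ν) := by positivity
  rw [norm_of_nonneg (by positivity), norm_of_nonneg (besselJMajorant_nonneg ν hs.le),
    besselJMajorant, ← mul_div_assoc, le_div_iff₀ (by positivity), mul_left_comm]
  gcongr
  linarith

theorem sqrt_isBigO_besselJMajorant (hν : -(1 / 2) ≤ ν) (hd : 0 < d) :
    sqrt =O[𝓟 (Ici d)] besselJMajorant ν := by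
  refine isBigO_principal.2 ⟨d ^ (-(1 / 2 + ν)) + 1, fun s hs => ?_⟩
  have hs₀ : 0 < s := lt_of_lt_of_le hd hs
  have hanti : s ^ (-(1 / 2 + ν)) ≤ d ^ (-(1 / 2 + ν)) :=
    rpow_le_rpow_of_nonpos hd hs (by linarith)
  rw [norm_of_nonneg (by positivity), norm_of_nonneg (besselJMajorant_nonneg ν hs₀.le),
    besselJMajorant, ← mul_div_assoc, le_div_iff₀ (by positivity), sqrt_eq_rpow]
  calc s ^ (1 / 2 : ℝ) * (1 + s ^ (1 / 2 + ν))
      = (s ^ (-(1 / 2 + ν)) + 1) * s ^ (1 + ν) := by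
        simp only [mul_add, add_mul, mul_one, one_mul, ← rpow_add hs₀]
        ring_nf
    _ ≤ (d ^ (-(1 / 2 + ν)) + 1) * (s ^ (3 * ν) + s ^ (1 + ν)) := by
        gcongr
        exact le_add_of_nonneg_left (by positivity)
    _ = (d ^ (-(1 / 2 + ν)) + 1) * (s ^ (3 * ν) * (1 + s ^ (1 - 2 * ν))) := by
        rw [mul_add (s ^ (3 * ν)), mul_one, ← rpow_add hs₀]
        ring_nf

theorem inv_sqrt_bessel_isBigO (hν : 0 < ν) :
    (fun s => (√(besselJ ν s ^ 2 + besselY ν s ^ 2))⁻¹) =O[𝓟 (Ioi 0)] linearFormMajorant ν :=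
  isBigO_principal_Ioi_zero
    ((inv_sqrt_sq_add_sq_isBigO (rpow_neg_isBigO_besselY hν)).trans
      ((rpow_isBigO_linearFormMajorant ν).mono (le_principal_iff.2 self_mem_nhdsWithin)))
    fun _ hd => ((isBesselSolution_besselJ ν).inv_sqrt_isBigO (isBesselSolution_besselY ν)
      (besselWronskian_besselJ_besselY_ne_zero hν) hd).trans
      ((sqrt_isBigO_linearFormMajorant ν).mono (principal_mono.2 (Ici_subset_Ioi.2 hd)))

theorem linearForm_div_bessel_isBigO (hν : 0 < ν) :
    (fun s => (besselJ ν s * cos (ν * π) - besselY ν s * sin (ν * π)) /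
      (besselJ ν s ^ 2 + besselY ν s ^ 2)) =O[𝓟 (Ioi 0)] linearFormMajorant ν := by
  refine (div_isBigO_inv_sqrt fun s => ?_).trans (inv_sqrt_bessel_isBigO hν)
  nlinarith [sq_nonneg (besselJ ν s * sin (ν * π) + besselY ν s * cos (ν * π)),
    sin_sq_add_cos_sq (ν * π)]

theorem besselJ_div_bessel_isBigO (hν : 0 < ν) :
    (fun s => besselJ ν s / (besselJ ν s ^ 2 + besselY ν s ^ 2)) =O[𝓟 (Ioi 0)]
      besselJMajorant ν := by
  have hJ := isBesselSolution_besselJ ν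
  have hY := isBesselSolution_besselY ν
  refine isBigO_principal_Ioi_zero ?_ fun d hd => ?_
  · exact (hJ.div_sq_add_sq_isBigO hν hY (besselJ_isBigO_one hν)
      (rpow_neg_isBigO_besselY hν)).trans (rpow_isBigO_besselJMajorant (by linarith))
  · have hw := besselWronskian_besselJ_besselY_ne_zero hν
    exact ((div_isBigO_inv_sqrt fun s => le_add_of_nonneg_right (sq_nonneg _)).trans
      (hJ.inv_sqrt_isBigO hY hw hd)).trans (sqrt_isBigO_besselJMajorant (by linarith) hd)

end Majorants

end BesselModulus

theorem bessel_quotient_bounds_general (ν : ℝ) (hν : 0 < ν) :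
    ∃ C > (0 : ℝ), ∃ C' > (0 : ℝ), ∀ s : ℝ, 0 < s →
      0 < besselJ ν s ^ 2 + besselY ν s ^ 2 ∧
      |besselJ ν s * cos (ν * π) - besselY ν s * sin (ν * π)| /
          (besselJ ν s ^ 2 + besselY ν s ^ 2) ≤
        C * s ^ ν * (1 + s ^ (1 - 2 * ν)) / (1 + s ^ (1 / 2 - ν)) ∧
      |besselJ ν s| / (besselJ ν s ^ 2 + besselY ν s ^ 2) ≤
        C' * s ^ (3 * ν) * (1 + s ^ (1 - 2 * ν)) / (1 + s ^ (1 / 2 + ν)) := by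
  obtain ⟨C, hC, hlinear⟩ := (linearForm_div_bessel_isBigO hν).exists_pos
  obtain ⟨C', hC', hJ⟩ := (besselJ_div_bessel_isBigO hν).exists_pos
  refine ⟨C, hC, C', hC', fun s hs => ?_⟩
  have hpos := besselJ_sq_add_besselY_sq_pos hν hs
  refine ⟨hpos, ?_, ?_⟩
  · have h := Asymptotics.isBigOWith_principal.1 hlinear s hs
    rwa [norm_div, norm_of_nonneg hpos.le, norm_eq_abs,
      norm_of_nonneg (linearFormMajorant_nonneg ν hs.le), linearFormMajorant, ← mul_div_assoc,
      ← mul_assoc] at h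
  · have h := Asymptotics.isBigOWith_principal.1 hJ s hs
    rwa [norm_div, norm_of_nonneg hpos.le, norm_eq_abs,
      norm_of_nonneg (besselJMajorant_nonneg ν hs.le), besselJMajorant, ← mul_div_assoc,
      ← mul_assoc] at h

/-- **Lemma (uniform Bessel quotient bounds).**
For `0 < ν ≤ 1/2` there exist constants `C_ν, C'_ν > 0` such that for all `s > 0`:
`J_ν(s)² + Y_ν(s)² > 0`,
`|J_ν(s) cos νπ - Y_ν(s) sin νπ|/(J_ν(s)²+Y_ν(s)²) ≤ C_ν s^ν (1+s^{1-2ν})/(1+s^{1/2-ν})`, and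
`|J_ν(s)|/(J_ν(s)²+Y_ν(s)²) ≤ C'_ν s^{3ν} (1+s^{1-2ν})/(1+s^{1/2+ν})`. -/
theorem bessel_quotient_bounds (ν : ℝ) (hν0 : 0 < ν) (hν : ν ≤ 1 / 2) :
    ∃ C > (0 : ℝ), ∃ C' > (0 : ℝ), ∀ s : ℝ, 0 < s →
      0 < besselJ ν s ^ 2 + besselY ν s ^ 2 ∧
      |besselJ ν s * Real.cos (ν * π) - besselY ν s * Real.sin (ν * π)| /
          (besselJ ν s ^ 2 + besselY ν s ^ 2) ≤
        C * s ^ ν * (1 + s ^ (1 - 2 * ν)) / (1 + s ^ (1 / 2 - ν)) ∧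
      |besselJ ν s| / (besselJ ν s ^ 2 + besselY ν s ^ 2) ≤
        C' * s ^ (3 * ν) * (1 + s ^ (1 - 2 * ν)) / (1 + s ^ (1 / 2 + ν)) :=
  bessel_quotient_bounds_general ν hν0
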